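/- (Log-cutoff function) For every δ ∈ (0, 1/4) and ε ∈ (0,1), there exists a C^∞ function τ : ℝ → ℝ with τ = 1 on (−∞, δε], τ = 0 on [ε, ∞), 0 ≤ τ ≤ 1 everywhere, and for every positive integer l there is a constant C_l > 0 (independent of δ, ε) such that |τ^{(l)}(t)| ≤ C_l t^{−l} |log δ|^{−1} for all t > 0. -/

import Mathlib

/-- The iterated derivatives of `Real.smoothTransition` of positive order are bounded. -/
lemma exists_abs_iteratedDeriv_smoothTransition_le (k : ℕ) :
    ∃ M : ℝ, 0 < M ∧ ∀ u, |iteratedDeriv (k + 1) Real.smoothTransition u| ≤ M := by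
  have hc : Continuous (iteratedDeriv (k + 1) Real.smoothTransition) :=
    (Real.smoothTransition.contDiff (n := ((k + 1 : ℕ) : ℕ∞))).continuous_iteratedDeriv (k + 1) le_rfl
  obtain ⟨M, hM⟩ := (isCompact_Icc (a := (0 : ℝ)) (b := 1)).exists_bound_of_continuousOn
    hc.continuousOn
  refine ⟨max M 1, by positivity, fun u => ?_⟩
  have hconst : ∀ a : ℝ, Real.smoothTransition =ᶠ[nhds u] (fun _ => a) →
      |iteratedDeriv (k + 1) Real.smoothTransition u| ≤ max M 1 := by
    intro a h
    rw [h.iteratedDeriv_eq, iteratedDeriv_const]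
    simp
  rcases lt_or_ge u 0 with h0 | h0
  · apply hconst 0
    filter_upwards [Iio_mem_nhds h0] with v hv
    exact Real.smoothTransition.zero_of_nonpos (le_of_lt hv)
  rcases lt_or_ge 1 u with h1 | h1
  · apply hconst 1
    filter_upwards [Ioi_mem_nhds h1] with v hv
    exact Real.smoothTransition.one_of_one_le (le_of_lt hv)
  · exact (hM u ⟨h0, h1⟩).trans (le_max_left _ _)

lemma hasDerivAt_comp_log_div {g : ℝ → ℝ} (hg : Differentiable ℝ g) (c L : ℝ) {t : ℝ}
    (ht : 0 < t) :
    HasDerivAt (fun s => g ((c - Real.log s) / L))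
      (-(t⁻¹ * (L⁻¹ * deriv g ((c - Real.log t) / L)))) t := by
  have h1 : HasDerivAt (fun s => (c - Real.log s) / L) (-t⁻¹ / L) t :=
    ((Real.hasDerivAt_log ht.ne').const_sub c).div_const L
  exact ((hg ((c - Real.log t) / L)).hasDerivAt.comp t h1).congr_deriv (by ring)

/-- Positive-order derivatives of a logarithmically rescaled smooth transition are a power of
`t⁻¹` times a function whose derivatives are all `O(L⁻¹)`, uniformly in the shift `c`. -/
lemma exists_iteratedDeriv_smoothTransition_log (l : ℕ) :
    ∃ C : ℕ → ℝ, (∀ k, 0 < C k) ∧ ∀ L : ℝ, 1 ≤ L → ∀ c : ℝ, ∃ g : ℝ → ℝ,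
      ContDiff ℝ (⊤ : ℕ∞) g ∧ (∀ k u, |iteratedDeriv k g u| ≤ C k * L⁻¹) ∧
      ∀ t : ℝ, 0 < t →
        iteratedDeriv (l + 1) (fun s => Real.smoothTransition ((c - Real.log s) / L)) t =
          t⁻¹ ^ (l + 1) * g ((c - Real.log t) / L) := by
  induction l with
  | zero =>
    choose M hM0 hM using exists_abs_iteratedDeriv_smoothTransition_le
    refine ⟨M, hM0, fun L hL c => ⟨fun u => -L⁻¹ * deriv Real.smoothTransition u, ?_, ?_, ?_⟩⟩
    · exact contDiff_const.mul
        ((contDiff_infty_iff_deriv.1 Real.smoothTransition.contDiff).2)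
    · intro k u
      rw [iteratedDeriv_const_mul_field, ← iteratedDeriv_succ', abs_mul, abs_neg,
        abs_of_nonneg (by positivity), mul_comm]
      gcongr
      exact hM k u
    · intro t ht
      rw [zero_add, iteratedDeriv_one, (hasDerivAt_comp_log_div
        ((Real.smoothTransition.contDiff (n := 1)).differentiable (by simp)) c L ht).deriv]
      ring
  | succ l ih =>
    obtain ⟨C, hC0, hC⟩ := ih
    refine ⟨fun k => (l + 1) * C k + C (k + 1), fun k => ?_, fun L hL c => ?_⟩
    · have := hC0 k
      have := hC0 (k + 1)
      positivity
    obtain ⟨g, hg, hgC, hgt⟩ := hC L hL c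
    have hg' : ContDiff ℝ (⊤ : ℕ∞) (deriv g) := (contDiff_infty_iff_deriv.1 hg).2
    refine ⟨fun u => -(l + 1 : ℝ) * g u - L⁻¹ * deriv g u,
      (contDiff_const.mul hg).sub (contDiff_const.mul hg'), fun k u => ?_, fun t ht => ?_⟩
    · have hk : ((k : ℕ) : WithTop ℕ∞) ≤ ((⊤ : ℕ∞) : WithTop ℕ∞) := by exact_mod_cast le_top
      rw [iteratedDeriv_fun_sub ((contDiff_const.mul hg).of_le hk).contDiffAt
        ((contDiff_const.mul hg').of_le hk).contDiffAt, iteratedDeriv_const_mul_field,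
        iteratedDeriv_const_mul_field, ← iteratedDeriv_succ']
      have hL1 : L⁻¹ ≤ 1 := inv_le_one_of_one_le₀ hL
      have hL0 : 0 ≤ L⁻¹ := by positivity
      calc _ ≤ |-(l + 1 : ℝ) * iteratedDeriv k g u| + |L⁻¹ * iteratedDeriv (k + 1) g u| :=
            abs_sub _ _
        _ = (l + 1) * |iteratedDeriv k g u| + L⁻¹ * |iteratedDeriv (k + 1) g u| := by
            rw [abs_mul, abs_mul, abs_neg, abs_of_nonneg hL0,
              abs_of_nonneg (by positivity : (0 : ℝ) ≤ l + 1)]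
        _ ≤ (l + 1) * (C k * L⁻¹) + 1 * (C (k + 1) * L⁻¹) := by
            gcongr
            · exact hgC k u
            · exact hgC (k + 1) u
        _ = _ := by ring
    · have hev : iteratedDeriv (l + 1)
          (fun s => Real.smoothTransition ((c - Real.log s) / L)) =ᶠ[nhds t]
          fun s => s⁻¹ ^ (l + 1) * g ((c - Real.log s) / L) := by
        filter_upwards [Ioi_mem_nhds ht] with s hs using hgt s hs
      rw [iteratedDeriv_succ, hev.deriv_eq]
      refine ((((hasDerivAt_inv ht.ne').pow (l + 1)).mul
        (hasDerivAt_comp_log_div (hg.differentiable (by simp)) c L ht)).deriv).trans ?_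
      simp only [Pi.pow_apply, Nat.cast_add, Nat.cast_one, Nat.add_sub_cancel]
      ring


/-- (Log-cutoff function.) There are constants `C l > 0`, one for
each positive integer `l` (independent of `δ` and `ε`), such that for every
`δ ∈ (0, 1/4)` and `ε ∈ (0, 1)` there exists a `C^∞` function `τ : ℝ → ℝ` with:
`τ = 1` on `(−∞, δε]`; `τ = 0` on `[ε, ∞)`; `0 ≤ τ ≤ 1` everywhere; and
`|τ⁽ˡ⁾(t)| ≤ C l · t⁻ˡ · |log δ|⁻¹` for all `t > 0` and all `l ≥ 1`. -/
theorem stmt12 :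
    ∃ C : ℕ → ℝ, (∀ l, 0 < C l) ∧
      ∀ δ ∈ Set.Ioo (0 : ℝ) (1 / 4), ∀ ε ∈ Set.Ioo (0 : ℝ) 1,
        ∃ τ : ℝ → ℝ, ContDiff ℝ (⊤ : ℕ∞) τ ∧
          (∀ t ≤ δ * ε, τ t = 1) ∧
          (∀ t, ε ≤ t → τ t = 0) ∧
          (∀ t, 0 ≤ τ t ∧ τ t ≤ 1) ∧
          (∀ l : ℕ, 1 ≤ l → ∀ t : ℝ, 0 < t →
            |iteratedDeriv l τ t| ≤ C l * t ^ (-(l : ℝ)) * |Real.log δ|⁻¹) := by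
  choose C hC0 hC using exists_iteratedDeriv_smoothTransition_log
  refine ⟨fun l => C (l - 1) 0, fun l => hC0 _ 0, ?_⟩
  rintro δ ⟨hδ0, hδ4⟩ ε ⟨hε0, -⟩
  have hlog : Real.log δ ≤ -1 := by
    rw [Real.log_le_iff_le_exp hδ0, Real.exp_neg]
    refine hδ4.le.trans ?_
    rw [one_div]
    gcongr
    linarith [Real.exp_one_lt_d9]
  set L := |Real.log δ| with hL
  have hLneg : L = -Real.log δ := abs_of_nonpos (by linarith)
  have hL1 : 1 ≤ L := by linarith
  set F : ℝ → ℝ := fun s => Real.smoothTransition ((Real.log ε - Real.log s) / L) with hF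
  set τ : ℝ → ℝ := fun s => if s ≤ 0 then 1 else F s with hτ
  have hτF : ∀ t, 0 < t → τ =ᶠ[nhds t] F := by
    intro t ht
    filter_upwards [Ioi_mem_nhds ht] with s hs
    exact if_neg (not_le.2 hs)
  have hone : ∀ t ≤ δ * ε, τ t = 1 := by
    intro t ht
    rcases le_or_gt t 0 with h | h
    · exact if_pos h
    · rw [(hτF t h).eq_of_nhds]
      apply Real.smoothTransition.one_of_one_le
      rw [one_le_div (by linarith)]
      have := Real.log_le_log h ht
      rw [Real.log_mul hδ0.ne' hε0.ne'] at this
      linarith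
  refine ⟨τ, ?_, hone, ?_, ?_, ?_⟩
  · rw [contDiff_iff_contDiffAt]
    intro t
    rcases lt_or_ge t (δ * ε) with h | h
    · refine (contDiffAt_const (c := (1 : ℝ))).congr_of_eventuallyEq ?_
      filter_upwards [Iio_mem_nhds h] with s hs using hone s (le_of_lt hs)
    · have ht : 0 < t := (mul_pos hδ0 hε0).trans_le h
      refine ContDiffAt.congr_of_eventuallyEq ?_ (hτF t ht)
      exact Real.smoothTransition.contDiffAt.comp t
        ((contDiffAt_const.sub (Real.contDiffAt_log.2 ht.ne')).div_const L)
  · intro t ht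
    have h : 0 < t := hε0.trans_le ht
    rw [(hτF t h).eq_of_nhds]
    apply Real.smoothTransition.zero_of_nonpos
    have := Real.log_le_log hε0 ht
    exact div_nonpos_of_nonpos_of_nonneg (by linarith) (by linarith)
  · intro t
    by_cases h : t ≤ 0
    · simp [hτ, h]
    · simp only [hτ, h, if_false]
      exact ⟨Real.smoothTransition.nonneg _, Real.smoothTransition.le_one _⟩
  · intro l hl t ht
    obtain ⟨m, rfl⟩ := Nat.exists_eq_add_of_le' hl
    obtain ⟨g, -, hgC, hgt⟩ := hC m L hL1 (Real.log ε)
    simp only [Nat.add_sub_cancel]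
    rw [(hτF t ht).iteratedDeriv_eq, hgt t ht, Real.rpow_neg ht.le,
      Real.rpow_natCast, abs_mul, abs_of_pos (by positivity), ← inv_pow]
    have := hgC 0 ((Real.log ε - Real.log t) / L)
    rw [iteratedDeriv_zero] at this
    calc _ ≤ t⁻¹ ^ (m + 1) * (C m 0 * L⁻¹) := by gcongr
      _ = _ := by ring
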